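/- arXiv:math/0210139 — 2 statements merged into one kernel-verified Lean document; each statement's English description precedes it below -/
import Mathlib

section
/- Let q ∈ ℝ with |q| > 1 and n ≥ 1. Let H = ℓ²(ℤ × ℕⁿ) with orthonormal basis e_{(k₀,k)}, k₀ ∈ ℤ, k = (k₁, …, k_n) ∈ ℕⁿ, and define bounded operators: X₁ e_{(k₀,k)} = q^{−(k₁+⋯+k_n)} e_{(k₀+1,k)}; for i = 2, …, n+1, X_i e_{(k₀,k)} = (1 − q^{−2k_{i−1}})^{1/2} q^{−(k_i+⋯+k_n)} e_{(k₀, k−δ_{i−1})} (zero when k_{i−1} = 0); and F e_{(k₀,k)} = e_{(k₀,k)} if k₀ > 0, F e_{(k₀,k)} = −e_{(k₀,k)} if k₀ ≤ 0. Then: (a) F X_i = X_i F for all i = 2, …, n+1; (b) the commutator F X₁ − X₁ F is the operator sending e_{(0,k)} to 2 q^{−(k₁+⋯+k_n)} e_{(1,k)} and annihilating all basis vectors e_{(k₀,k)} with k₀ ≠ 0, and this operator is trace class; consequently, for every element w of the free unital complex *-algebra on x₁, …, x_{n+1}, the commutator [F, Ψ(w)] is trace class, where Ψ is the unital *-homomorphism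 with Ψ(x_i) = X_i (so (H, F, Ψ) is a 1-summable odd Fredholm module over A(S^{2n+1}_q)). -/
/-!
The operator `F` only sees `k₀`, and `X₁` moves `k₀` to `k₀ + 1`, so `[F, X₁]` kills every basis
vector except those with `k₀ = 0`, where the sign flips. There `‖[F, X₁] e_(0,k)‖` is
`2 |q|^(-(k₁ + ⋯ + k_n))`, which is summable over `ℕⁿ` as a product of geometric series, and an
operator whose values on an orthonormal basis are norm-summable is trace class. The other `X_i` fix
`k₀` and commute with `F`. Since the trace class operators form a self-adjoint two-sided ideal and
`F` is self-adjoint, the operators `w` with `[F, w]` trace class form a unital *-subalgebra.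
-/

/-- The standard orthonormal basis vector of `ℓ²(ℤ × ℕⁿ)` at `(k₀, k)`. -/
noncomputable def eVecZ (n : ℕ) (p : ℤ × (Fin n → ℕ)) :
    lp (fun _ : ℤ × (Fin n → ℕ) => ℂ) 2 :=
  lp.single 2 p 1

/-- A bounded operator on `ℓ²(ℤ × ℕⁿ)` is Hilbert–Schmidt if the squared norms of the
images of the standard basis vectors are summable. -/
def IsHilbertSchmidt {n : ℕ}
    (T : lp (fun _ : ℤ × (Fin n → ℕ) => ℂ) 2 →L[ℂ] lp (fun _ : ℤ × (Fin n → ℕ) => ℂ) 2) :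
    Prop :=
  Summable fun p : ℤ × (Fin n → ℕ) => ‖T (eVecZ n p)‖ ^ 2

/-- A bounded operator is trace class iff it is a product of two Hilbert–Schmidt
operators. -/
def IsTraceClass {n : ℕ}
    (T : lp (fun _ : ℤ × (Fin n → ℕ) => ℂ) 2 →L[ℂ] lp (fun _ : ℤ × (Fin n → ℕ) => ℂ) 2) :
    Prop :=
  ∃ A B, IsHilbertSchmidt A ∧ IsHilbertSchmidt B ∧ T = A * B

section Summability

variable {ι : Type*}

theorem summable_prod_pi [Fintype ι] {κ : ι → Type*} {f : ∀ i, κ i → ℝ}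
    (hf₀ : ∀ i a, 0 ≤ f i a) (hf : ∀ i, Summable (f i)) :
    Summable fun k : ∀ i, κ i => ∏ i, f i (k i) := by
  classical
  refine summable_of_sum_le (c := ∏ i, ∑' a, f i a)
    (fun k => Finset.prod_nonneg fun i _ => hf₀ i (k i)) fun s => ?_
  have hs : s ⊆ Fintype.piFinset fun i => s.image fun k => k i := fun k hk =>
    Fintype.mem_piFinset.2 fun _ => Finset.mem_image_of_mem _ hk
  calc ∑ k ∈ s, ∏ i, f i (k i)
      ≤ ∑ k ∈ Fintype.piFinset fun i => s.image fun k => k i, ∏ i, f i (k i) :=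
        Finset.sum_le_sum_of_subset_of_nonneg hs fun k _ _ =>
          Finset.prod_nonneg fun i _ => hf₀ i (k i)
    _ = ∏ i, ∑ a ∈ s.image fun k => k i, f i a := (Finset.prod_univ_sum _ _).symm
    _ ≤ ∏ i, ∑' a, f i a :=
        Finset.prod_le_prod (fun i _ => Finset.sum_nonneg fun a _ => hf₀ i a) fun i _ =>
          (hf i).sum_le_tsum _ fun a _ => hf₀ i a

theorem summable_pow_sum [Fintype ι] {r : ℝ} (h₀ : 0 ≤ r) (h₁ : r < 1) :
    Summable fun k : ι → ℕ => r ^ ∑ i, k i := by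
  simp_rw [← Finset.prod_pow_eq_pow_sum]
  exact summable_prod_pi (fun _ m => pow_nonneg h₀ m)
    fun _ => summable_geometric_of_lt_one h₀ h₁

theorem summable_norm_inv_pow_sum [Fintype ι] {K : Type*} [NormedDivisionRing K] {q : K}
    (hq : 1 < ‖q‖) : Summable fun k : ι → ℕ => ‖(q ^ ∑ i, k i)⁻¹‖ := by
  simpa using summable_pow_sum (inv_nonneg.2 (norm_nonneg q)) (inv_lt_one_of_one_lt₀ hq)

theorem summable_mul_of_summable_sq {f g : ι → ℝ} (hf₀ : ∀ i, 0 ≤ f i) (hg₀ : ∀ i, 0 ≤ g i)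
    (hf : Summable fun i => f i ^ 2) (hg : Summable fun i => g i ^ 2) :
    Summable fun i => f i * g i :=
  Real.summable_mul_of_Lp_Lq_of_nonneg Real.HolderConjugate.two_two hf₀ hg₀
    (by simpa using hf) (by simpa using hg)

theorem tsum_mul_le_sqrt_mul_sqrt {f g : ι → ℝ} (hf₀ : ∀ i, 0 ≤ f i) (hg₀ : ∀ i, 0 ≤ g i)
    (hf : Summable fun i => f i ^ 2) (hg : Summable fun i => g i ^ 2) :
    ∑' i, f i * g i ≤ √(∑' i, f i ^ 2) * √(∑' i, g i ^ 2) := by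
  simpa [Real.sqrt_eq_rpow] using
    Real.inner_le_Lp_mul_Lq_tsum_of_nonneg Real.HolderConjugate.two_two hf₀ hg₀
      (by simpa using hf) (by simpa using hg)

end Summability

section HilbertBasisOperators

variable {ι κ 𝕜 E G : Type*} [RCLike 𝕜] [NormedAddCommGroup E] [InnerProductSpace 𝕜 E]

local notation "⟪" x ", " y "⟫" => inner 𝕜 x y

theorem hasSum_norm_inner_sq_hilbertBasis (b : HilbertBasis ι 𝕜 E) (x : E) :
    HasSum (fun i => ‖⟪b i, x⟫‖ ^ 2) (‖x‖ ^ 2) := by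
  simpa [b.repr_apply_apply] using lp.hasSum_norm (p := 2) (by norm_num) (b.repr x)

theorem ext_apply_hilbertBasis [NormedAddCommGroup G] [NormedSpace 𝕜 G] (b : HilbertBasis ι 𝕜 E)
    {S T : E →L[𝕜] G} (h : ∀ i, S (b i) = T (b i)) : S = T :=
  ContinuousLinearMap.ext_on (Submodule.dense_iff_topologicalClosure_eq_top.2 b.dense_span)
    (Set.forall_mem_range.2 h)

theorem exists_clm_apply_hilbertBasis_eq [NormedAddCommGroup G] [NormedSpace 𝕜 G] [CompleteSpace G]
    (b : HilbertBasis ι 𝕜 E) {v : ι → G} (hv : Summable fun i => ‖v i‖ ^ 2) :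
    ∃ T : E →L[𝕜] G, ∀ i, T (b i) = v i := by
  classical
  have hx : ∀ x, HasSum (fun i => ‖b.repr x i‖ ^ 2) (‖x‖ ^ 2) := fun x => by
    simpa only [b.repr_apply_apply] using hasSum_norm_inner_sq_hilbertBasis b x
  have hnorm : ∀ x, Summable fun i => ‖b.repr x i • v i‖ := fun x => by
    simpa only [norm_smul] using summable_mul_of_summable_sq (fun _ => norm_nonneg _)
      (fun _ => norm_nonneg _) (hx x).summable hv
  let L : E →ₗ[𝕜] G :=
    { toFun := fun x => ∑' i, b.repr x i • v i
      map_add' := fun x y => by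
        simpa [add_smul] using (hnorm x).of_norm.tsum_add (hnorm y).of_norm
      map_smul' := fun c x => by
        simpa [mul_smul] using (hnorm x).of_norm.tsum_const_smul c }
  have hL : ∀ x, ‖L x‖ ≤ √(∑' i, ‖v i‖ ^ 2) * ‖x‖ := fun x =>
    calc ‖L x‖ ≤ ∑' i, ‖b.repr x i • v i‖ := norm_tsum_le_tsum_norm (hnorm x)
      _ = ∑' i, ‖b.repr x i‖ * ‖v i‖ := by simp_rw [norm_smul]
      _ ≤ √(∑' i, ‖b.repr x i‖ ^ 2) * √(∑' i, ‖v i‖ ^ 2) :=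
        tsum_mul_le_sqrt_mul_sqrt (fun _ => norm_nonneg _) (fun _ => norm_nonneg _)
          (hx x).summable hv
      _ = √(∑' i, ‖v i‖ ^ 2) * ‖x‖ := by
        rw [(hx x).tsum_eq, Real.sqrt_sq (norm_nonneg x), mul_comm]
  refine ⟨L.mkContinuous _ hL, fun i => ?_⟩
  change ∑' j, b.repr (b i) j • v j = v i
  rw [tsum_eq_single i fun j hj => by rw [b.repr_self, lp.single_apply_ne _ _ _ hj, zero_smul],
    b.repr_self, lp.single_apply_self, one_smul]

section InnerProductCodomain

variable [NormedAddCommGroup G] [InnerProductSpace 𝕜 G]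

theorem ext_inner_apply_hilbertBasis (b : HilbertBasis ι 𝕜 E) (c : HilbertBasis κ 𝕜 G)
    {S T : E →L[𝕜] G} (h : ∀ i j, ⟪c j, S (b i)⟫ = ⟪c j, T (b i)⟫) : S = T :=
  ext_apply_hilbertBasis b fun i => c.repr.injective <| lp.ext <| funext fun j => by
    simpa only [c.repr_apply_apply] using h i j

theorem exists_linearIsometry_apply_hilbertBasis_eq [CompleteSpace G] (b : HilbertBasis ι 𝕜 E)
    {v : ι → G} (hv : Orthonormal 𝕜 v) : ∃ V : E →ₗᵢ[𝕜] G, ∀ i, V (b i) = v i := by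
  classical
  refine ⟨hv.orthogonalFamily.linearIsometry.comp b.repr.toLinearIsometry, fun i => ?_⟩
  simp [b.repr_self]

variable [CompleteSpace E] [CompleteSpace G]

/-- Both sums are the sum of `‖⟪c j, T (b i)⟫‖ ^ 2` over all pairs `(i, j)`. -/
theorem summable_norm_sq_adjoint_apply_hilbertBasis (b : HilbertBasis ι 𝕜 E)
    (c : HilbertBasis κ 𝕜 G) {T : E →L[𝕜] G} (hT : Summable fun i => ‖T (b i)‖ ^ 2) :
    Summable fun j => ‖T.adjoint (c j)‖ ^ 2 := by
  have hrow : ∀ i, HasSum (fun j => ‖⟪c j, T (b i)⟫‖ ^ 2) (‖T (b i)‖ ^ 2) := fun i =>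
    hasSum_norm_inner_sq_hilbertBasis c (T (b i))
  have hcol : ∀ j, HasSum (fun i => ‖⟪c j, T (b i)⟫‖ ^ 2) (‖T.adjoint (c j)‖ ^ 2) := fun j => by
    simpa only [T.adjoint_inner_right, norm_inner_symm] using
      hasSum_norm_inner_sq_hilbertBasis b (T.adjoint (c j))
  have hprod : Summable fun p : ι × κ => ‖⟪c p.2, T (b p.1)⟫‖ ^ 2 :=
    (summable_prod_of_nonneg fun _ => sq_nonneg _).2
      ⟨fun i => (hrow i).summable, by simpa only [(hrow _).tsum_eq] using hT⟩
  simpa only [Prod.fst_swap, Prod.snd_swap, (hcol _).tsum_eq] using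
    ((summable_prod_of_nonneg fun _ => sq_nonneg _).1 hprod.prod_symm).2

end InnerProductCodomain

variable [CompleteSpace E]

theorem isSelfAdjoint_of_apply_hilbertBasis_eq_smul (b : HilbertBasis ι 𝕜 E) {d : ι → 𝕜}
    (hd : ∀ i, IsSelfAdjoint (d i)) {D : E →L[𝕜] E} (hD : ∀ i, D (b i) = d i • b i) :
    IsSelfAdjoint D := by
  classical
  refine ext_inner_apply_hilbertBasis b b fun i j => ?_
  rw [ContinuousLinearMap.star_eq_adjoint, D.adjoint_inner_right, hD, hD, inner_smul_left,
    inner_smul_right, orthonormal_iff_ite.1 b.orthonormal]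
  split_ifs with hji
  · rw [hji]
    exact congrArg (· * 1) (hd i)
  · rw [mul_zero, mul_zero]

theorem exists_isometries_with_orthogonal_ranges [Infinite ι] (b : HilbertBasis ι 𝕜 E) :
    ∃ V W : E →L[𝕜] E, star V * V = 1 ∧ star W * W = 1 ∧ star V * W = 0 := by
  classical
  obtain ⟨e⟩ : Nonempty (ι ⊕ ι ≃ ι) := Cardinal.eq.1 <| by
    rw [← Cardinal.add_def, Cardinal.add_eq_self (Cardinal.aleph0_le_mk ι)]
  obtain ⟨V, hV⟩ := exists_linearIsometry_apply_hilbertBasis_eq b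
    (b.orthonormal.comp (e ∘ Sum.inl) (e.injective.comp Sum.inl_injective))
  obtain ⟨W, hW⟩ := exists_linearIsometry_apply_hilbertBasis_eq b
    (b.orthonormal.comp (e ∘ Sum.inr) (e.injective.comp Sum.inr_injective))
  have hb := orthonormal_iff_ite.1 b.orthonormal
  refine ⟨V.toContinuousLinearMap, W.toContinuousLinearMap, ?_, ?_, ?_⟩ <;>
    refine ext_inner_apply_hilbertBasis b b fun i j => ?_ <;>
    simp [ContinuousLinearMap.star_eq_adjoint, ContinuousLinearMap.adjoint_inner_right, hV, hW, hb]

end HilbertBasisOperators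

theorem commutator_apply_of_eigenvectors {R M : Type*} [CommRing R] [TopologicalSpace M]
    [AddCommGroup M] [IsTopologicalAddGroup M] [Module R M] {D T : M →L[R] M} {x y : M} {a b c : R}
    (hx : D x = a • x) (hy : D y = b • y) (hT : T x = c • y) :
    (D * T - T * D) x = ((b - a) * c) • y := by
  simp only [sub_apply, mul_apply_eq_comp, hx, hT, map_smul, hy]
  module

section OddSphere

local notation "ℋ " n:max => lp (fun _ : ℤ × (Fin n → ℕ) => ℂ) 2

/-- The vectors `eVecZ n p` as a Hilbert basis of `ℓ²(ℤ × ℕⁿ)`, to which the results on general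
Hilbert bases apply. -/
noncomputable def eVecZBasis (n : ℕ) : HilbertBasis (ℤ × (Fin n → ℕ)) ℂ (ℋ n) :=
  HilbertBasis.ofRepr (LinearIsometryEquiv.refl ℂ (ℋ n))

variable {n : ℕ}

@[simp]
theorem eVecZBasis_apply (p : ℤ × (Fin n → ℕ)) : eVecZBasis n p = eVecZ n p :=
  ((eVecZBasis n).repr_symm_single p).symm

@[simp]
theorem norm_eVecZ (p : ℤ × (Fin n → ℕ)) : ‖eVecZ n p‖ = 1 := by
  simpa using (eVecZBasis n).orthonormal.1 p

namespace IsHilbertSchmidt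

variable {S T : ℋ n →L[ℂ] ℋ n}

protected theorem star (hT : IsHilbertSchmidt T) : IsHilbertSchmidt (star T) := by
  simpa only [IsHilbertSchmidt, ContinuousLinearMap.star_eq_adjoint, eVecZBasis_apply] using
    summable_norm_sq_adjoint_apply_hilbertBasis (eVecZBasis n) (eVecZBasis n)
      (by simpa only [eVecZBasis_apply] using show Summable fun p => ‖T (eVecZ n p)‖ ^ 2 from hT)

theorem mul_left (S : ℋ n →L[ℂ] ℋ n) (hT : IsHilbertSchmidt T) : IsHilbertSchmidt (S * T) := by
  refine Summable.of_nonneg_of_le (fun _ => sq_nonneg _) (fun p => ?_)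
    (Summable.mul_left (‖S‖ ^ 2) hT)
  rw [← mul_pow]
  gcongr
  exact S.le_opNorm _

theorem mul_right (hT : IsHilbertSchmidt T) (S : ℋ n →L[ℂ] ℋ n) : IsHilbertSchmidt (T * S) := by
  simpa using (hT.star.mul_left (star S)).star

protected theorem add (hS : IsHilbertSchmidt S) (hT : IsHilbertSchmidt T) :
    IsHilbertSchmidt (S + T) := by
  refine Summable.of_nonneg_of_le (fun _ => sq_nonneg _) (fun p => ?_)
    (Summable.mul_left 2 (Summable.add hS hT))
  calc ‖S (eVecZ n p) + T (eVecZ n p)‖ ^ 2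
      ≤ (‖S (eVecZ n p)‖ + ‖T (eVecZ n p)‖) ^ 2 := by gcongr; exact norm_add_le _ _
    _ ≤ 2 * (‖S (eVecZ n p)‖ ^ 2 + ‖T (eVecZ n p)‖ ^ 2) := add_sq_le

end IsHilbertSchmidt

namespace IsTraceClass

variable {S T : ℋ n →L[ℂ] ℋ n}

protected theorem zero : IsTraceClass (0 : ℋ n →L[ℂ] ℋ n) :=
  ⟨0, 0, by simp [IsHilbertSchmidt], by simp [IsHilbertSchmidt], by simp⟩

theorem mul_left (S : ℋ n →L[ℂ] ℋ n) (hT : IsTraceClass T) : IsTraceClass (S * T) := by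
  obtain ⟨A, B, hA, hB, rfl⟩ := hT
  exact ⟨S * A, B, hA.mul_left S, hB, (mul_assoc S A B).symm⟩

theorem mul_right (hT : IsTraceClass T) (S : ℋ n →L[ℂ] ℋ n) : IsTraceClass (T * S) := by
  obtain ⟨A, B, hA, hB, rfl⟩ := hT
  exact ⟨A, B * S, hA, hB.mul_right S, mul_assoc A B S⟩

protected theorem star (hT : IsTraceClass T) : IsTraceClass (star T) := by
  obtain ⟨A, B, hA, hB, rfl⟩ := hT
  exact ⟨star B, star A, hB.star, hA.star, star_mul A B⟩

protected theorem neg (hT : IsTraceClass T) : IsTraceClass (-T) := by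
  simpa using hT.mul_left (-1)

/-- Isometries `V`, `W` with orthogonal ranges turn a sum of two products into a single product. -/
protected theorem add (hS : IsTraceClass S) (hT : IsTraceClass T) : IsTraceClass (S + T) := by
  obtain ⟨A, B, hA, hB, rfl⟩ := hS
  obtain ⟨C, D, hC, hD, rfl⟩ := hT
  obtain ⟨V, W, hVV, hWW, hVW⟩ := exists_isometries_with_orthogonal_ranges (eVecZBasis n)
  have hWV : star W * V = 0 := by simpa using congrArg star hVW
  refine ⟨A * star V + C * star W, V * B + W * D,
    (hA.mul_right _).add (hC.mul_right _), (hB.mul_left V).add (hD.mul_left W), ?_⟩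
  calc A * B + C * D
      = A * (star V * V) * B + A * (star V * W) * D +
          C * (star W * V) * B + C * (star W * W) * D := by
        rw [hVV, hWW, hVW, hWV]; simp
    _ = (A * star V + C * star W) * (V * B + W * D) := by noncomm_ring

/-- Factor `T` through the diagonal operator with entries `√‖T e_p‖`. -/
theorem of_summable_norm (hT : Summable fun p => ‖T (eVecZ n p)‖) : IsTraceClass T := by
  set w : ℤ × (Fin n → ℕ) → ℝ := fun p => √‖T (eVecZ n p)‖
  have hw : ∀ p, w p ^ 2 = ‖T (eVecZ n p)‖ := fun p => Real.sq_sqrt (norm_nonneg _)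
  have hnormA : ∀ p, ‖((w p)⁻¹ : ℂ) • T (eVecZ n p)‖ ^ 2 = ‖T (eVecZ n p)‖ := fun p => by
    rw [norm_smul, norm_inv, Complex.norm_real, mul_pow, inv_pow, Real.norm_eq_abs, sq_abs, hw]
    by_cases h : ‖T (eVecZ n p)‖ = 0
    · simp [h]
    · field_simp
  have hnormB : ∀ p, ‖(w p : ℂ) • eVecZ n p‖ ^ 2 = ‖T (eVecZ n p)‖ := fun p => by
    rw [norm_smul, Complex.norm_real, norm_eVecZ, mul_one, Real.norm_eq_abs, sq_abs, hw]
  obtain ⟨A, hA⟩ := exists_clm_apply_hilbertBasis_eq (eVecZBasis n)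
    (hT.congr fun p => (hnormA p).symm)
  obtain ⟨B, hB⟩ := exists_clm_apply_hilbertBasis_eq (eVecZBasis n)
    (hT.congr fun p => (hnormB p).symm)
  simp only [eVecZBasis_apply] at hA hB
  refine ⟨A, B, ?_, ?_, ext_apply_hilbertBasis (eVecZBasis n) fun p => ?_⟩
  · simpa only [IsHilbertSchmidt, hA, hnormA] using hT
  · simpa only [IsHilbertSchmidt, hB, hnormB] using hT
  · rw [eVecZBasis_apply, mul_apply_eq_comp, hB, map_smul, hA]
    by_cases h : w p = 0
    · have hTp : T (eVecZ n p) = 0 := by simpa [h] using (hw p).symm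
      simp [hTp]
    · rw [smul_inv_smul₀ (Complex.ofReal_ne_zero.2 h)]

theorem commutator_of_mem_adjoin {F w : ℋ n →L[ℂ] ℋ n} {s : Set (ℋ n →L[ℂ] ℋ n)}
    (hF : IsSelfAdjoint F) (hs : ∀ x ∈ s, IsTraceClass (F * x - x * F))
    (hw : w ∈ StarAlgebra.adjoin ℂ s) : IsTraceClass (F * w - w * F) := by
  induction hw using StarAlgebra.adjoin_induction with
  | mem x hx => exact hs x hx
  | algebraMap c =>
    rw [← Algebra.commutes, sub_self]
    exact .zero
  | add x y _ _ hx hy =>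
    rw [show F * (x + y) - (x + y) * F = (F * x - x * F) + (F * y - y * F) by noncomm_ring]
    exact hx.add hy
  | mul x y _ _ hx hy =>
    rw [show F * (x * y) - x * y * F = (F * x - x * F) * y + x * (F * y - y * F) by noncomm_ring]
    exact (hx.mul_right y).add (hy.mul_left x)
  | star x _ hx => simpa [hF.star_eq] using hx.star.neg

end IsTraceClass

/-- The sign `F = χ(D)` of the number operator in the first variable, with the convention
`sign 0 = -1`. -/
def IsSignOperator (F : ℋ n →L[ℂ] ℋ n) : Prop :=
  ∀ (k₀ : ℤ) (k : Fin n → ℕ),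
    F (eVecZ n (k₀, k)) = (if 0 < k₀ then (1 : ℂ) else -1) • eVecZ n (k₀, k)

/-- The operator `S` shifts the first variable up by one, with a weight `c` depending only on the
other variables; this is the form of `X₁`. -/
def IsWeightedShift (c : (Fin n → ℕ) → ℂ) (S : ℋ n →L[ℂ] ℋ n) : Prop :=
  ∀ (k₀ : ℤ) (k : Fin n → ℕ), S (eVecZ n (k₀, k)) = c k • eVecZ n (k₀ + 1, k)

namespace IsSignOperator

variable {F S T : ℋ n →L[ℂ] ℋ n} {c : (Fin n → ℕ) → ℂ}

theorem isSelfAdjoint (hF : IsSignOperator F) : IsSelfAdjoint F := by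
  refine isSelfAdjoint_of_apply_hilbertBasis_eq_smul (eVecZBasis n)
    (d := fun p => if 0 < p.1 then 1 else -1) (fun p => ?_) fun p => by simpa using hF p.1 p.2
  split_ifs
  exacts [.one ℂ, (IsSelfAdjoint.one ℂ).neg]

theorem mul_comm_of_preserves_fst (hF : IsSignOperator F)
    (hT : ∀ k₀ k, ∃ (a : ℂ) (k' : Fin n → ℕ), T (eVecZ n (k₀, k)) = a • eVecZ n (k₀, k')) :
    F * T = T * F := by
  rw [← sub_eq_zero]
  refine ext_apply_hilbertBasis (eVecZBasis n) fun ⟨k₀, k⟩ => ?_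
  obtain ⟨a, k', ha⟩ := hT k₀ k
  rw [eVecZBasis_apply, commutator_apply_of_eigenvectors (hF k₀ k) (hF k₀ k') ha]
  simp

theorem commutator_weightedShift_apply_zero (hF : IsSignOperator F) (hS : IsWeightedShift c S)
    (k : Fin n → ℕ) : (F * S - S * F) (eVecZ n (0, k)) = (2 * c k) • eVecZ n (1, k) := by
  rw [commutator_apply_of_eigenvectors (hF 0 k) (hF (0 + 1) k) (hS 0 k)]
  norm_num

theorem commutator_weightedShift_apply_of_ne_zero (hF : IsSignOperator F)
    (hS : IsWeightedShift c S) {k₀ : ℤ} (hk₀ : k₀ ≠ 0) (k : Fin n → ℕ) :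
    (F * S - S * F) (eVecZ n (k₀, k)) = 0 := by
  have hsign : 0 < k₀ + 1 ↔ 0 < k₀ := by lia
  rw [commutator_apply_of_eigenvectors (hF k₀ k) (hF (k₀ + 1) k) (hS k₀ k)]
  simp [hsign]

theorem isTraceClass_commutator_weightedShift (hF : IsSignOperator F) (hS : IsWeightedShift c S)
    (hc : Summable fun k => ‖c k‖) : IsTraceClass (F * S - S * F) := by
  refine .of_summable_norm <| ((Prod.mk_right_injective (0 : ℤ)).summable_iff ?_).1 ?_
  · rintro ⟨k₀, k⟩ hk
    rw [hF.commutator_weightedShift_apply_of_ne_zero hS (fun h => hk ⟨k, by rw [h]⟩), norm_zero]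
  · refine (hc.mul_left 2).congr fun k => ?_
    rw [Function.comp_apply, hF.commutator_weightedShift_apply_zero hS, norm_smul, norm_mul,
      norm_eVecZ, mul_one, Complex.norm_ofNat]

end IsSignOperator

end OddSphere

/-- The odd Fredholm module for `S^{2n+1}_q`:  `F` commutes with `Xᵢ` for `i ≥ 2`, the
commutator `[F, X₁]` is the explicit rank-one-in-`k₀` trace-class operator, and `[F, w]`
is trace class for every `w` in the *-algebra generated by `X₁, …, X_{n+1}`; so
`(H, F, Ψ)` is a `1`-summable odd Fredholm module over `A(S^{2n+1}_q)`. -/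
theorem oddSphere_Fredholm_module (q : ℝ) (hq : 1 < |q|) (n : ℕ) (hn : 1 ≤ n)
    (X : ℕ → (lp (fun _ : ℤ × (Fin n → ℕ) => ℂ) 2 →L[ℂ] lp (fun _ : ℤ × (Fin n → ℕ) => ℂ) 2))
    (F : lp (fun _ : ℤ × (Fin n → ℕ) => ℂ) 2 →L[ℂ] lp (fun _ : ℤ × (Fin n → ℕ) => ℂ) 2)
    (hX1 : ∀ (k₀ : ℤ) (k : Fin n → ℕ),
      X 1 (eVecZ n (k₀, k)) = (((q ^ (∑ j, k j))⁻¹ : ℝ) : ℂ) • eVecZ n (k₀ + 1, k))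
    (hX1s : ∀ (k₀ : ℤ) (k : Fin n → ℕ),
      star (X 1) (eVecZ n (k₀, k)) = (((q ^ (∑ j, k j))⁻¹ : ℝ) : ℂ) • eVecZ n (k₀ - 1, k))
    (hXi : ∀ i : Fin n, ∀ (k₀ : ℤ) (k : Fin n → ℕ),
      X ((i : ℕ) + 2) (eVecZ n (k₀, k)) =
        (((Real.sqrt (1 - (q ^ (2 * k i))⁻¹) *
          (q ^ (∑ j ∈ Finset.univ.filter fun j => i < j, k j))⁻¹ : ℝ)) : ℂ) •
          eVecZ n (k₀, Function.update k i (k i - 1)))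
    (hF : ∀ (k₀ : ℤ) (k : Fin n → ℕ),
      F (eVecZ n (k₀, k)) = (if 0 < k₀ then (1 : ℂ) else -1) • eVecZ n (k₀, k)) :
    (∀ i : ℕ, 2 ≤ i → i ≤ n + 1 → F * X i = X i * F) ∧
    (∀ k : Fin n → ℕ,
      (F * X 1 - X 1 * F) (eVecZ n (0, k)) =
        ((2 * (q ^ (∑ j, k j))⁻¹ : ℝ) : ℂ) • eVecZ n (1, k)) ∧
    (∀ (k₀ : ℤ) (k : Fin n → ℕ), k₀ ≠ 0 → (F * X 1 - X 1 * F) (eVecZ n (k₀, k)) = 0) ∧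
    IsTraceClass (F * X 1 - X 1 * F) ∧
    (∀ w ∈ StarAlgebra.adjoin ℂ
        {T : lp (fun _ : ℤ × (Fin n → ℕ) => ℂ) 2 →L[ℂ] lp (fun _ : ℤ × (Fin n → ℕ) => ℂ) 2 |
          ∃ i : ℕ, 1 ≤ i ∧ i ≤ n + 1 ∧ T = X i},
      IsTraceClass (F * w - w * F)) := by
  have hsign : IsSignOperator F := hF
  have hshift : IsWeightedShift (fun k => (((q ^ ∑ j, k j)⁻¹ : ℝ) : ℂ)) (X 1) := hX1
  have hcomm : ∀ i : ℕ, 2 ≤ i → i ≤ n + 1 → F * X i = X i * F := by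
    intro i h2 hi
    obtain ⟨j, rfl⟩ : ∃ j : Fin n, i = (j : ℕ) + 2 :=
      ⟨⟨i - 2, by lia⟩, (Nat.sub_add_cancel h2).symm⟩
    exact hsign.mul_comm_of_preserves_fst fun k₀ k => ⟨_, _, hXi j k₀ k⟩
  have htrace : IsTraceClass (F * X 1 - X 1 * F) :=
    hsign.isTraceClass_commutator_weightedShift hshift (by
      simpa only [Complex.norm_real] using summable_norm_inv_pow_sum hq)
  refine ⟨hcomm, fun k => ?_, fun k₀ k hk₀ =>
    hsign.commutator_weightedShift_apply_of_ne_zero hshift hk₀ k, htrace, fun w hw =>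
    IsTraceClass.commutator_of_mem_adjoin hsign.isSelfAdjoint ?_ hw⟩
  · simpa using hsign.commutator_weightedShift_apply_zero hshift k
  · rintro _ ⟨i, h1, hi, rfl⟩
    rcases h1.eq_or_lt with rfl | h2
    · exact htrace
    · rw [hcomm i h2 hi, sub_self]
      exact .zero
end

section
/- Let q ∈ ℝ with |q| > 1 and n ≥ 1. With H = ℓ²(ℤ × ℕⁿ), X₁ the operator X₁ e_{(k₀,k)} = q^{−(k₁+⋯+k_n)} e_{(k₀+1,k)}, and F the sign operator F e_{(k₀,k)} = sign(k₀) e_{(k₀,k)} (sign(k₀) = 1 for k₀ > 0, −1 for k₀ ≤ 0), the operator X₁*(F X₁ − X₁ F) is trace class with Tr[X₁*(F X₁ − X₁ F)] = 2 (1 − q⁻²)⁻ⁿ. Consequently the index pairing of the odd Fredholm module μ_odd with the unitary V_{(2n+1)}, given by ⟨μ_odd, V_{(2n+1)}⟩ = −(1/2)(q⁻² − 1)ⁿ Tr[X₁*(F X₁ − X₁ F)], equals (−1)^{n+1}. -/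
/-!
Call `T` a weighted permutation when `T eᵢ = aᵢ e_{σ i}` on the standard basis. Such operators are
closed under products and adjoints, and for a diagonal `F` with entries `s` the operator
`T* (F T - T F)` is diagonal with entries `(s (σ i) - s i) |aᵢ|²`. When `σ` is the shift
`k₀ ↦ k₀ + 1` and `s` the sign, the difference is `2` on the slice `k₀ = 0` and vanishes elsewhere,
so the trace is twice a sum over `ℕⁿ`, which for `X₁` is a product of `n` geometric series of ratio
`q⁻²`. For trace class, `T* (F T - T F)` equals half of `C* C` with `C = F T - T F`, because a
difference `δ` equal to `0` or `2` satisfies `δ² = 2 δ`; and `C` is Hilbert–Schmidt.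
-/

open scoped ComplexConjugate lp

section Sums

theorem summable_norm_prod_pi {R : Type*} [NormedCommRing R] {n : ℕ} {β : Fin n → Type*}
    {f : ∀ j, β j → R} (hf : ∀ j, Summable fun b => ‖f j b‖) :
    Summable fun k : ∀ j, β j => ‖∏ j, f j (k j)‖ := by
  induction n with
  | zero => exact .of_finite
  | succ n ih =>
    refine (Fin.consEquiv β).summable_iff.1 ?_
    have hmul := Summable.mul_norm (hf 0) (ih fun j => hf j.succ)
    simpa [Function.comp_def, Fin.prod_univ_succ] using hmul

theorem hasSum_prod_pi {R : Type*} [NormedCommRing R] [CompleteSpace R] {n : ℕ}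
    {β : Fin n → Type*} {f : ∀ j, β j → R} {s : Fin n → R}
    (hf : ∀ j, Summable fun b => ‖f j b‖) (hs : ∀ j, HasSum (f j) (s j)) :
    HasSum (fun k : ∀ j, β j => ∏ j, f j (k j)) (∏ j, s j) := by
  induction n with
  | zero => simp
  | succ n ih =>
    have hsummable := summable_mul_of_summable_norm (hf 0)
      (summable_norm_prod_pi fun j => hf j.succ)
    have hmul := (hs 0).mul (ih (fun j => hf j.succ) fun j => hs j.succ) hsummable
    rw [← (Fin.consEquiv β).hasSum_iff]
    simpa [Function.comp_def, Fin.prod_univ_succ] using hmul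

theorem hasSum_pow_sum {K : Type*} [NormedField K] [CompleteSpace K] {r : K} (hr : ‖r‖ < 1)
    (n : ℕ) : HasSum (fun k : Fin n → ℕ => r ^ ∑ j, k j) ((1 - r) ^ n)⁻¹ := by
  simpa [Finset.prod_pow_eq_pow_sum] using
    hasSum_prod_pi (fun _ : Fin n => summable_norm_geometric_of_norm_lt_one hr)
      fun _ => hasSum_geometric_of_norm_lt_one hr

theorem hasSum_norm_sq_inv_pow_sum {K : Type*} [NormedDivisionRing K] {q : K} (hq : 1 < ‖q‖)
    (n : ℕ) : HasSum (fun k : Fin n → ℕ => ‖(q ^ ∑ j, k j)⁻¹‖ ^ 2)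
      ((1 - (‖q‖ ^ 2)⁻¹) ^ n)⁻¹ := by
  have hratio : ‖(‖q‖ ^ 2)⁻¹‖ < 1 := by
    rw [Real.norm_of_nonneg (by positivity)]
    exact inv_lt_one_of_one_lt₀ (one_lt_pow₀ hq two_ne_zero)
  refine (hasSum_pow_sum hratio n).congr_fun fun k => ?_
  rw [norm_inv, norm_pow, inv_pow, inv_pow, pow_right_comm]

theorem hasSum_ite_fst_eq_iff {α β M : Type*} [DecidableEq α] [AddCommMonoid M]
    [TopologicalSpace M] (a : α) {f : β → M} {s : M} :
    HasSum (fun p : α × β => if p.1 = a then f p.2 else 0) s ↔ HasSum f s := by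
  rw [← (Prod.mk_right_injective a).hasSum_iff]
  · simp [Function.comp_def]
  · rintro ⟨a', b⟩ hp
    have hne : a' ≠ a := by
      rintro rfl
      exact hp ⟨b, rfl⟩
    exact if_neg hne

end Sums

section WeightedPermutation

variable {𝕜 ι : Type*} [RCLike 𝕜] [DecidableEq ι]

theorem star_apply_single_apply (T : ℓ²(ι, 𝕜) →L[𝕜] ℓ²(ι, 𝕜)) (i j : ι) :
    (star T (lp.single 2 i 1)) j = conj ((T (lp.single 2 j 1)) i) := by
  have hadj := ContinuousLinearMap.adjoint_inner_right T (lp.single 2 j 1) (lp.single 2 i 1)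
  rw [lp.inner_single_left, lp.inner_single_right] at hadj
  simpa [ContinuousLinearMap.star_eq_adjoint] using hadj

/-- `T` is a weighted permutation (monomial) operator on `ℓ²(ι)`: it sends the standard basis
vector at `i` to `a i` times the one at `σ i`. Diagonal operators are the case `σ = 1`, and
weighted shifts are the case of a translation. -/
def IsWeightedPermutation (T : ℓ²(ι, 𝕜) →L[𝕜] ℓ²(ι, 𝕜)) (σ : Equiv.Perm ι) (a : ι → 𝕜) : Prop :=
  ∀ i, T (lp.single 2 i 1) = a i • lp.single 2 (σ i) 1

namespace IsWeightedPermutation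

variable {S T F : ℓ²(ι, 𝕜) →L[𝕜] ℓ²(ι, 𝕜)} {σ τ : Equiv.Perm ι} {a b s : ι → 𝕜}

theorem unique (hS : IsWeightedPermutation S σ a) (hT : IsWeightedPermutation T σ a) : S = T :=
  lp.ext_continuousLinearMap ENNReal.ofNat_ne_top fun i =>
    ContinuousLinearMap.ext_ring ((hS i).trans (hT i).symm)

theorem mul (hS : IsWeightedPermutation S σ a) (hT : IsWeightedPermutation T τ b) :
    IsWeightedPermutation (S * T) (σ * τ) fun i => a (τ i) * b i := fun i => by
  rw [mul_apply_eq_comp, hT, map_smul, hS, smul_smul, mul_comm, Equiv.Perm.mul_apply]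

theorem sub (hS : IsWeightedPermutation S σ a) (hT : IsWeightedPermutation T σ b) :
    IsWeightedPermutation (S - T) σ (a - b) := fun i => by
  rw [sub_apply, hS, hT, ← sub_smul, Pi.sub_apply]

theorem smul (c : 𝕜) (hT : IsWeightedPermutation T σ a) :
    IsWeightedPermutation (c • T) σ (c • a) := fun i => by
  rw [smul_apply, hT, smul_smul, Pi.smul_apply, smul_eq_mul]

protected theorem star (hT : IsWeightedPermutation T σ a) :
    IsWeightedPermutation (star T) σ⁻¹ fun i => conj (a (σ⁻¹ i)) := fun i => by
  ext j
  rw [star_apply_single_apply, hT]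
  rcases eq_or_ne j (σ⁻¹ i) with rfl | hji
  · simp
  · have hij : i ≠ σ j := fun h => hji (Equiv.Perm.eq_inv_iff_eq.2 h.symm)
    simp only [lp.coeFn_smul, Pi.smul_apply, lp.single_apply, Pi.single_eq_of_ne hij,
      Pi.single_eq_of_ne hji, smul_zero, map_zero]

theorem commutator (hF : IsWeightedPermutation F 1 s) (hT : IsWeightedPermutation T σ a) :
    IsWeightedPermutation (F * T - T * F) σ fun i => (s (σ i) - s i) * a i := by
  convert (hF.mul hT).sub (hT.mul hF) using 1
  · exact (one_mul σ).symm
  · ext i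
    simp only [Pi.sub_apply, Equiv.Perm.one_apply]
    ring

theorem star_mul (hS : IsWeightedPermutation S σ a) (hT : IsWeightedPermutation T σ b) :
    IsWeightedPermutation (star S * T) 1 fun i => conj (a i) * b i := by
  simpa using hS.star.mul hT

theorem star_mul_commutator (hF : IsWeightedPermutation F 1 s)
    (hT : IsWeightedPermutation T σ a) :
    IsWeightedPermutation (star T * (F * T - T * F)) 1
      fun i => (s (σ i) - s i) * (‖a i‖ ^ 2 : ℝ) := by
  convert hT.star_mul (hF.commutator hT) using 2 with i
  rw [mul_left_comm, RCLike.conj_mul, RCLike.ofReal_pow]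

theorem star_mul_commutator_eq_half_smul_star_mul (hF : IsWeightedPermutation F 1 s)
    (hT : IsWeightedPermutation T σ a) (hs : ∀ i, s (σ i) - s i = 0 ∨ s (σ i) - s i = 2) :
    star T * (F * T - T * F) =
      ((2 : 𝕜)⁻¹ • star (F * T - T * F)) * (F * T - T * F) := by
  have hC := hF.commutator hT
  rw [smul_mul_assoc]
  refine (hT.star_mul hC).unique ?_
  convert (hC.star_mul hC).smul (2 : 𝕜)⁻¹ using 1
  ext i
  rcases hs i with h | h <;> simp only [h, Pi.smul_apply, smul_eq_mul, map_mul, map_ofNat]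
  · simp
  · ring

theorem inner_apply_self (hT : IsWeightedPermutation T 1 a) (i : ι) :
    inner 𝕜 (lp.single 2 i 1 : ℓ²(ι, 𝕜)) (T (lp.single 2 i 1)) = a i := by
  rw [hT, inner_smul_right, lp.inner_single_left]
  simp

end IsWeightedPermutation

end WeightedPermutation

section HilbertSchmidt

variable {n : ℕ} {T F : ℓ²(ℤ × (Fin n → ℕ), ℂ) →L[ℂ] ℓ²(ℤ × (Fin n → ℕ), ℂ)}
  {σ : Equiv.Perm (ℤ × (Fin n → ℕ))} {a s : ℤ × (Fin n → ℕ) → ℂ}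

theorem IsHilbertSchmidt.smul (c : ℂ) (hT : IsHilbertSchmidt T) : IsHilbertSchmidt (c • T) := by
  simpa [IsHilbertSchmidt, norm_smul, mul_pow] using Summable.mul_left (‖c‖ ^ 2) hT

namespace IsWeightedPermutation

theorem isHilbertSchmidt_iff (hT : IsWeightedPermutation T σ a) :
    IsHilbertSchmidt T ↔ Summable fun p => ‖a p‖ ^ 2 := by
  refine summable_congr fun p => ?_
  rw [eVecZ, hT, norm_smul, lp.norm_single two_pos, norm_one, mul_one]

theorem isHilbertSchmidt_star_iff (hT : IsWeightedPermutation T σ a) :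
    IsHilbertSchmidt (star T) ↔ IsHilbertSchmidt T := by
  rw [hT.star.isHilbertSchmidt_iff, hT.isHilbertSchmidt_iff, ← σ.summable_iff]
  simp [Function.comp_def]

theorem isTraceClass_star_mul_commutator (hF : IsWeightedPermutation F 1 s)
    (hT : IsWeightedPermutation T σ a) (hs : ∀ p, s (σ p) - s p = 0 ∨ s (σ p) - s p = 2)
    (hC : IsHilbertSchmidt (F * T - T * F)) :
    IsTraceClass (star T * (F * T - T * F)) :=
  ⟨_, _, ((hF.commutator hT).isHilbertSchmidt_star_iff.2 hC).smul _, hC,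
    hF.star_mul_commutator_eq_half_smul_star_mul hT hs⟩

end IsWeightedPermutation

end HilbertSchmidt

section SignCommutator

/-- The eigenvalue of the sign operator `F` on the basis vectors with first index `k`. As in the
Fredholm module, the value at `0` is `-1`. -/
noncomputable def fredholmSign (k : ℤ) : ℂ :=
  if 0 < k then 1 else -1

theorem fredholmSign_add_one_sub (k : ℤ) :
    fredholmSign (k + 1) - fredholmSign k = if k = 0 then 2 else 0 := by
  unfold fredholmSign
  split_ifs <;> first | omega | norm_num

/-- The translation `(k₀, k) ↦ (k₀ + 1, k)` underlying the operator `X₁`. -/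
def fiberShift (α : Type*) : Equiv.Perm (ℤ × α) :=
  (Equiv.addRight 1).prodCongr (Equiv.refl α)

theorem fiberShift_apply_fst {α : Type*} (p : ℤ × α) : (fiberShift α p).1 = p.1 + 1 :=
  rfl

namespace IsWeightedPermutation

variable {n : ℕ} {X F : ℓ²(ℤ × (Fin n → ℕ), ℂ) →L[ℂ] ℓ²(ℤ × (Fin n → ℕ), ℂ)}
  {a : ℤ × (Fin n → ℕ) → ℂ}

theorem isHilbertSchmidt_sign_commutator
    (hF : IsWeightedPermutation F 1 fun p => fredholmSign p.1)
    (hX : IsWeightedPermutation X (fiberShift _) a) (ha : Summable fun k => ‖a (0, k)‖ ^ 2) :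
    IsHilbertSchmidt (F * X - X * F) := by
  rw [(hF.commutator hX).isHilbertSchmidt_iff]
  refine ((hasSum_ite_fst_eq_iff (0 : ℤ)).2 (ha.hasSum.mul_left 4)).summable.congr ?_
  rintro ⟨k₀, k⟩
  rw [fiberShift_apply_fst, fredholmSign_add_one_sub]
  split_ifs with h
  · subst h
    norm_num [mul_pow]
  · simp

theorem isTraceClass_star_mul_sign_commutator
    (hF : IsWeightedPermutation F 1 fun p => fredholmSign p.1)
    (hX : IsWeightedPermutation X (fiberShift _) a) (ha : Summable fun k => ‖a (0, k)‖ ^ 2) :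
    IsTraceClass (star X * (F * X - X * F)) := by
  refine hF.isTraceClass_star_mul_commutator hX (fun p => ?_)
    (hF.isHilbertSchmidt_sign_commutator hX ha)
  rw [fiberShift_apply_fst, fredholmSign_add_one_sub]
  exact (ite_eq_or_eq _ _ _).symm

theorem hasSum_inner_star_mul_sign_commutator {t : ℝ}
    (hF : IsWeightedPermutation F 1 fun p => fredholmSign p.1)
    (hX : IsWeightedPermutation X (fiberShift _) a) (ha : HasSum (fun k => ‖a (0, k)‖ ^ 2) t) :
    HasSum (fun p => inner ℂ (eVecZ n p) ((star X * (F * X - X * F)) (eVecZ n p)))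
      ((2 * t : ℝ) : ℂ) := by
  have hslice := (hasSum_ite_fst_eq_iff (0 : ℤ)).2 (Complex.hasSum_ofReal.2 (ha.mul_left 2))
  refine hslice.congr_fun ?_
  rintro ⟨k₀, k⟩
  rw [eVecZ, (hF.star_mul_commutator hX).inner_apply_self, fiberShift_apply_fst,
    fredholmSign_add_one_sub]
  split_ifs with h
  · subst h
    simp
  · simp

end IsWeightedPermutation

end SignCommutator

theorem neg_half_mul_sub_one_pow_mul {K : Type*} [Field K] [NeZero (2 : K)] {x : K} (hx : x ≠ 1)
    (n : ℕ) : -2⁻¹ * (x - 1) ^ n * (2 * ((1 - x) ^ n)⁻¹) = (-1) ^ (n + 1) := by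
  have hpow : (1 - x) ^ n ≠ 0 := pow_ne_zero n (sub_ne_zero.2 hx.symm)
  have htwo : (2 : K) ≠ 0 := two_ne_zero
  rw [← neg_sub 1 x, neg_pow, pow_succ]
  field_simp

/-- The index pairing of the odd Fredholm module with the unitary `V_{(2n+1)}`:
`X₁*[F, X₁]` is trace class with trace `2(1-q⁻²)⁻ⁿ`, and the pairing
`⟨μ_odd, V_{(2n+1)}⟩ = -½ (q⁻²-1)ⁿ Tr(X₁*[F,X₁])` equals `(-1)^{n+1}`. -/
theorem odd_pairing (q : ℝ) (hq : 1 < |q|) (n : ℕ) (hn : 1 ≤ n)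
    (X₁ F : lp (fun _ : ℤ × (Fin n → ℕ) => ℂ) 2 →L[ℂ] lp (fun _ : ℤ × (Fin n → ℕ) => ℂ) 2)
    (hX1 : ∀ (k₀ : ℤ) (k : Fin n → ℕ),
      X₁ (eVecZ n (k₀, k)) = (((q ^ (∑ j, k j))⁻¹ : ℝ) : ℂ) • eVecZ n (k₀ + 1, k))
    (hX1s : ∀ (k₀ : ℤ) (k : Fin n → ℕ),
      star X₁ (eVecZ n (k₀, k)) = (((q ^ (∑ j, k j))⁻¹ : ℝ) : ℂ) • eVecZ n (k₀ - 1, k))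
    (hF : ∀ (k₀ : ℤ) (k : Fin n → ℕ),
      F (eVecZ n (k₀, k)) = (if 0 < k₀ then (1 : ℂ) else -1) • eVecZ n (k₀, k)) :
    IsTraceClass (star X₁ * (F * X₁ - X₁ * F)) ∧
    (Summable fun p : ℤ × (Fin n → ℕ) =>
      (inner ℂ (eVecZ n p) ((star X₁ * (F * X₁ - X₁ * F)) (eVecZ n p)) : ℂ)) ∧
    ∑' p : ℤ × (Fin n → ℕ),
        (inner ℂ (eVecZ n p) ((star X₁ * (F * X₁ - X₁ * F)) (eVecZ n p)) : ℂ) =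
      ((2 * ((1 - (q ^ 2)⁻¹) ^ n)⁻¹ : ℝ) : ℂ) ∧
    (-(2 : ℂ)⁻¹ * (((q : ℂ) ^ 2)⁻¹ - 1) ^ n) *
        ∑' p : ℤ × (Fin n → ℕ),
          (inner ℂ (eVecZ n p) ((star X₁ * (F * X₁ - X₁ * F)) (eVecZ n p)) : ℂ) =
      (-1) ^ (n + 1) := by
  have hX : IsWeightedPermutation X₁ (fiberShift _) fun p => (((q ^ ∑ j, p.2 j)⁻¹ : ℝ) : ℂ) :=
    fun p => hX1 p.1 p.2
  have hsign : IsWeightedPermutation F 1 fun p => fredholmSign p.1 := fun p => hF p.1 p.2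
  have hweights : HasSum (fun k : Fin n → ℕ => ‖(((q ^ ∑ j, k j)⁻¹ : ℝ) : ℂ)‖ ^ 2)
      ((1 - (q ^ 2)⁻¹) ^ n)⁻¹ := by
    rw [← sq_abs]
    exact (hasSum_norm_sq_inv_pow_sum (K := ℝ) hq n).congr_fun fun k => by rw [Complex.norm_real]
  have htrace := hsign.hasSum_inner_star_mul_sign_commutator hX hweights
  refine ⟨hsign.isTraceClass_star_mul_sign_commutator hX hweights.summable, htrace.summable,
    htrace.tsum_eq, ?_⟩
  rw [htrace.tsum_eq]
  have hratio : (q ^ 2)⁻¹ < 1 := inv_lt_one_of_one_lt₀ ((one_lt_sq_iff_one_lt_abs q).2 hq)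
  have hratio_ne : ((q : ℂ) ^ 2)⁻¹ ≠ 1 := mod_cast hratio.ne
  simpa using neg_half_mul_sub_one_pow_mul hratio_ne n
end
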